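/- arXiv:2602.07514 — 2 statements merged into one kernel-verified Lean document; each statement's English description precedes it below -/
import Mathlib

section
/- Let α ∈ (0,1), β > 0, and let μ be a probability measure on ℝ that is absolutely continuous with respect to the Lebesgue measure. Then the fractional characteristic function φ_{α,β}^{(μ)}(s) = ∫_ℝ E_{α,β}(i s ξ) dμ(ξ) tends to 0 as |s| → ∞. -/
open Complex MeasureTheory

/-- The two-parameter Mittag–Leffler function `E_{α,β}(z) = ∑ zⁿ / Γ(αn + β)`. -/
noncomputable def mittagLeffler (α β : ℝ) (z : ℂ) : ℂ :=
  ∑' n : ℕ, z ^ n / (Real.Gamma (α * n + β) : ℂ)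

/-!
Fourier inversion of the Gamma density gives `1 / Γ(x) = (2πi)⁻¹ ∫ exp s * s ^ (-x) ds` along
`Re s = 1`, absolutely convergent for `Re x > 1`. Applying it to `1 / Γ(x) = x / Γ(x + 1)` with
`x = α n + β` and summing an arithmetico-geometric series in `z s ^ (-α)` represents `E_{α,β}(z)`,
for `‖z‖ < 1`, as a contour integral whose integrand is rational in `z`. For `Re s = 1` the sector
bound `Re (s ^ α) ≥ cos (α π / 2) |s| ^ α` keeps the pole `z = s ^ α` out of the half-plane
`Re z < cos (α π / 2)`, so the representation persists there by analytic continuation. On `Re z ≤ 0`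
the integrand is dominated uniformly in `z` and tends to `0` as `z → ∞`, hence `E_{α,β}` is bounded
and vanishes at infinity on this half-plane. Dominated convergence in `ξ` then leaves only the
contribution `μ {0} / Γ(β)` of the atom at `ξ = 0`.
-/

open Filter Set Bornology
open scoped Topology FourierTransform

section HolomorphicParameter

variable {X E : Type*} [MeasurableSpace X] {ν : Measure X} [NormedAddCommGroup E]
  [NormedSpace ℂ E] {F : ℂ → X → E} {U : Set ℂ}

lemma aestronglyMeasurable_deriv_of_differentiableOn (hU : IsOpen U)
    (hF_meas : ∀ z ∈ U, AEStronglyMeasurable (F z) ν)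
    (hF_diff : ∀ᵐ x ∂ν, DifferentiableOn ℂ (F · x) U) {z : ℂ} (hz : z ∈ U) :
    AEStronglyMeasurable (fun x => deriv (F · x) z) ν := by
  have hadd : Tendsto (fun h : ℂ => z + h) (𝓝[≠] 0) (𝓝 z) :=
    (by simpa using (continuous_const_add z).tendsto 0 : Tendsto _ _ _).mono_left
      nhdsWithin_le_nhds
  obtain ⟨h, hh⟩ := exists_seq_tendsto (𝓝[≠] (0 : ℂ))
  obtain ⟨N, hN⟩ := eventually_atTop.mp ((hadd.comp hh).eventually (hU.mem_nhds hz))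
  refine aestronglyMeasurable_of_tendsto_ae atTop
    (f := fun n x => (h (n + N))⁻¹ • (F (z + h (n + N)) x - F z x))
    (fun n => ((hF_meas _ (hN _ (Nat.le_add_left N n))).sub (hF_meas z hz)).const_smul _) ?_
  filter_upwards [hF_diff] with x hx
  exact (hx.differentiableAt (hU.mem_nhds hz)).hasDerivAt.tendsto_slope_zero.comp
    (hh.comp (tendsto_add_atTop_nat N))

-- Cauchy's estimate converts domination of `F` into domination of its derivative.
theorem differentiableOn_integral_of_dominated_loc (hU : IsOpen U)
    (hF_meas : ∀ z ∈ U, AEStronglyMeasurable (F z) ν)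
    (hF_diff : ∀ᵐ x ∂ν, DifferentiableOn ℂ (F · x) U)
    (hF_bound : ∀ z ∈ U, ∃ V ∈ 𝓝 z, ∃ bound : X → ℝ, Integrable bound ν ∧
      ∀ᵐ x ∂ν, ∀ w ∈ V, ‖F w x‖ ≤ bound x) :
    DifferentiableOn ℂ (fun z => ∫ x, F z x ∂ν) U := by
  intro z hz
  obtain ⟨V, hV, bound, hbound, hFV⟩ := hF_bound z hz
  obtain ⟨R, hR, hball⟩ := Metric.mem_nhds_iff.mp (inter_mem hV (hU.mem_nhds hz))
  have hr : 0 < R / 2 := half_pos hR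
  have hclosedBall : ∀ w ∈ Metric.ball z (R / 2), Metric.closedBall w (R / 2) ⊆ V ∩ U := by
    intro w hw
    refine (Metric.closedBall_subset_ball' ?_).trans hball
    linarith [Metric.mem_ball.mp hw]
  refine (hasDerivAt_integral_of_dominated_loc_of_deriv_le (Metric.ball_mem_nhds z hr)
    (bound := fun x => bound x / (R / 2)) (F' := fun w x => deriv (F · x) w)
    ((hU.eventually_mem hz).mono hF_meas) (hbound.mono' (hF_meas z hz) ?_)
    (aestronglyMeasurable_deriv_of_differentiableOn hU hF_meas hF_diff hz) ?_
    (hbound.div_const _) ?_).2.differentiableAt.differentiableWithinAt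
  · filter_upwards [hFV] with x hx
    exact hx z (mem_of_mem_nhds hV)
  · filter_upwards [hFV, hF_diff] with x hx hdiff w hw
    refine Complex.norm_deriv_le_of_forall_mem_sphere_norm_le hr ?_ fun u hu =>
      hx u (hclosedBall w hw (Metric.sphere_subset_closedBall hu)).1
    exact hdiff.diffContOnCl_ball fun u hu => (hclosedBall w hw hu).2
  · filter_upwards [hF_diff] with x hdiff w hw
    exact (hdiff.differentiableAt (hU.mem_nhds
      (hclosedBall w hw (Metric.mem_closedBall_self hr.le)).2)).hasDerivAt

end HolomorphicParameter

lemma eqOn_of_differentiableOn_of_eventually_ofReal_eq {f g : ℂ → ℂ} {U : Set ℂ}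
    (hU : IsOpen U) (hU' : IsPreconnected U) (hf : DifferentiableOn ℂ f U)
    (hg : DifferentiableOn ℂ g U) {x : ℝ} (hx : (x : ℂ) ∈ U)
    (hfg : ∀ᶠ y : ℝ in 𝓝 x, f y = g y) : EqOn f g U := by
  have hofReal : Tendsto (fun y : ℝ => (y : ℂ)) (𝓝[≠] x) (𝓝[≠] (x : ℂ)) :=
    continuous_ofReal.continuousWithinAt.tendsto_nhdsWithin fun y hy => by simpa using hy
  exact (hf.analyticOnNhd hU).eqOn_of_preconnected_of_frequently_eq (hg.analyticOnNhd hU) hU' hx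
    (hofReal.frequently (hfg.filter_mono nhdsWithin_le_nhds).frequently)

section GammaLaplace

lemma norm_cpow_mul_cexp_neg_mul (a r : ℂ) {t : ℝ} (ht : 0 < t) :
    ‖(t : ℂ) ^ a * cexp (-(r * t))‖ = t ^ a.re * Real.exp (-r.re * t) := by
  rw [norm_mul, norm_cpow_eq_rpow_re_of_pos ht, Complex.norm_exp]
  simp

lemma integrableOn_rpow_mul_exp_neg_mul_Ioi {a r : ℝ} (ha : -1 < a) (hr : 0 < r) :
    IntegrableOn (fun t : ℝ => t ^ a * Real.exp (-r * t)) (Ioi 0) := by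
  simpa using integrableOn_rpow_mul_exp_neg_mul_rpow ha one_pos hr

lemma aestronglyMeasurable_cpow_mul_cexp_neg_mul (a r : ℂ) (ν : Measure ℝ) :
    AEStronglyMeasurable (fun t : ℝ => (t : ℂ) ^ a * cexp (-(r * t))) ν :=
  Measurable.aestronglyMeasurable (by fun_prop)

lemma integrableOn_cpow_mul_cexp_neg_mul_Ioi {a r : ℂ} (ha : -1 < a.re) (hr : 0 < r.re) :
    IntegrableOn (fun t : ℝ => (t : ℂ) ^ a * cexp (-(r * t))) (Ioi 0) := by
  refine (integrableOn_rpow_mul_exp_neg_mul_Ioi ha hr).mono'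
    (aestronglyMeasurable_cpow_mul_cexp_neg_mul a r _) ?_
  filter_upwards [ae_restrict_mem measurableSet_Ioi] with t ht
  exact (norm_cpow_mul_cexp_neg_mul a r ht).le

lemma differentiableOn_integral_cpow_mul_cexp_neg_mul_Ioi {a : ℂ} (ha : -1 < a.re) :
    DifferentiableOn ℂ (fun r : ℂ => ∫ t : ℝ in Ioi 0, (t : ℂ) ^ a * cexp (-(r * t)))
      {r | 0 < r.re} := by
  refine differentiableOn_integral_of_dominated_loc (isOpen_lt continuous_const continuous_re)
    (fun r _ => aestronglyMeasurable_cpow_mul_cexp_neg_mul a r _)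
    (Eventually.of_forall fun t => by fun_prop) fun r (hr : 0 < r.re) => ?_
  refine ⟨{w | r.re / 2 < w.re}, (isOpen_lt continuous_const continuous_re).mem_nhds
    (half_lt_self hr), _, integrableOn_rpow_mul_exp_neg_mul_Ioi ha (half_pos hr), ?_⟩
  filter_upwards [ae_restrict_mem measurableSet_Ioi] with t (ht : 0 < t) w (hw : r.re / 2 < w.re)
  rw [norm_cpow_mul_cexp_neg_mul a w ht]
  gcongr

theorem integral_cpow_mul_cexp_neg_mul_Ioi {a r : ℂ} (ha : 0 < a.re) (hr : 0 < r.re) :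
    ∫ t : ℝ in Ioi 0, (t : ℂ) ^ (a - 1) * cexp (-(r * t)) = r ^ (-a) * Gamma a := by
  have hcpow : DifferentiableOn ℂ (fun r : ℂ => r ^ (-a) * Gamma a) {r | 0 < r.re} :=
    fun w hw => ((differentiableAt_id.cpow_const (Or.inl hw)).mul_const _).differentiableWithinAt
  refine eqOn_of_differentiableOn_of_eventually_ofReal_eq
    (isOpen_lt continuous_const continuous_re) (convex_halfSpace_re_gt 0).isPreconnected
    (differentiableOn_integral_cpow_mul_cexp_neg_mul_Ioi (by simpa)) hcpow (x := 1) (by simp) ?_ hr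
  filter_upwards [lt_mem_nhds one_pos] with y hy
  have harg : (y : ℂ).arg ≠ Real.pi := by
    rw [arg_ofReal_of_nonneg hy.le]
    exact Real.pi_pos.ne
  rw [integral_cpow_mul_exp_neg_mul_Ioi ha hy, one_div, inv_cpow _ _ harg, cpow_neg]

end GammaLaplace

/-- The vertical line `Re s = 1`, along which inverse Laplace transforms are computed. The speed
`2π` absorbs the constant of the inversion formula: `ds / (2πi) = dv`. -/
noncomputable def bromwichLine (v : ℝ) : ℂ := 1 + 2 * Real.pi * v * I

namespace bromwichLine

lemma re_eq_one (v : ℝ) : (bromwichLine v).re = 1 := by simp [bromwichLine]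

lemma ne_zero (v : ℝ) : bromwichLine v ≠ 0 := fun h => by
  simpa [h] using re_eq_one v

lemma one_le_norm (v : ℝ) : 1 ≤ ‖bromwichLine v‖ := by
  simpa [re_eq_one] using re_le_norm (bromwichLine v)

lemma one_add_sq_le_sq_norm (v : ℝ) : 1 + ‖v‖ ^ 2 ≤ ‖bromwichLine v‖ ^ 2 := by
  have hnorm : ‖bromwichLine v‖ ^ 2 = 1 + (2 * Real.pi) ^ 2 * v ^ 2 := by
    rw [Complex.sq_norm, normSq_apply]
    simp only [bromwichLine, add_re, one_re, mul_re, re_ofNat, ofReal_re, im_ofNat, ofReal_im,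
      mul_im, I_re, I_im, add_im, one_im]
    ring
  rw [hnorm, Real.norm_eq_abs, sq_abs]
  have : (1 : ℝ) ≤ (2 * Real.pi) ^ 2 := one_le_pow₀ (by linarith [Real.pi_gt_three])
  gcongr
  exact le_mul_of_one_le_left (sq_nonneg v) this

protected lemma continuous : Continuous bromwichLine := by
  unfold bromwichLine
  fun_prop

lemma continuous_cpow (c : ℂ) : Continuous fun v => bromwichLine v ^ c :=
  bromwichLine.continuous.cpow continuous_const fun v => Or.inl (by simp [re_eq_one])

lemma norm_cpow_neg_ofReal_le_one {α : ℝ} (hα : 0 ≤ α) (v : ℝ) :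
    ‖bromwichLine v ^ (-(α : ℂ))‖ ≤ 1 := by
  rw [norm_cpow_of_ne_zero (ne_zero v)]
  simpa using Real.rpow_le_one_of_one_le_of_nonpos (one_le_norm v) (neg_nonpos.mpr hα)

lemma norm_cpow_neg_le {x : ℂ} (hx : 0 ≤ x.re) (v : ℝ) :
    ‖bromwichLine v ^ (-x)‖ ≤
      (1 + ‖v‖ ^ 2) ^ (-x.re / 2) * Real.exp (Real.pi * |x.im|) := by
  have hsq : ‖bromwichLine v‖ ^ (-x.re) = (‖bromwichLine v‖ ^ 2) ^ (-x.re / 2) := by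
    rw [← Real.rpow_natCast, ← Real.rpow_mul (norm_nonneg _)]
    congr 1
    push_cast
    ring
  have harg : (bromwichLine v).arg * x.im ≤ Real.pi * |x.im| :=
    (le_abs_self _).trans (by rw [abs_mul]; gcongr; exact abs_arg_le_pi _)
  rw [norm_cpow_of_ne_zero (ne_zero v), div_eq_mul_inv, ← Real.exp_neg, neg_re, neg_im,
    mul_neg, neg_neg, hsq]
  gcongr ?_ * Real.exp ?_
  exact Real.rpow_le_rpow_of_nonpos (by positivity) (one_add_sq_le_sq_norm v) (by linarith)

lemma integrable_cpow_neg {x : ℂ} (hx : 1 < x.re) :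
    Integrable fun v => bromwichLine v ^ (-x) :=
  ((integrable_rpow_neg_one_add_norm_sq (by simpa)).mul_const _).mono'
    (continuous_cpow _).aestronglyMeasurable
    (Eventually.of_forall (norm_cpow_neg_le (by linarith)))

lemma integrable_cexp_mul_cpow_neg {x : ℂ} (hx : 1 < x.re) :
    Integrable fun v => cexp (bromwichLine v) * bromwichLine v ^ (-x) :=
  (integrable_cpow_neg hx).bdd_mul (c := Real.exp 1)
    (continuous_exp.comp bromwichLine.continuous).aestronglyMeasurable
    (Eventually.of_forall fun v => by simp [Complex.norm_exp, re_eq_one])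

end bromwichLine

/-- The integrand `t ^ (a - 1) * exp (-t)` of Euler's integral for `Γ(a)`, extended by `0` to
`t ≤ 0` so that it can be Fourier transformed over `ℝ`. -/
noncomputable def gammaIntegrand (a : ℂ) : ℝ → ℂ :=
  (Ioi 0).indicator fun t : ℝ => (t : ℂ) ^ (a - 1) * cexp (-(1 * t))

namespace gammaIntegrand

protected lemma integrable {a : ℂ} (ha : 0 < a.re) : Integrable (gammaIntegrand a) :=
  (integrableOn_cpow_mul_cexp_neg_mul_Ioi (by simpa) (by simp)).integrable_indicator
    measurableSet_Ioi

lemma continuousAt_of_pos (a : ℂ) {t : ℝ} (ht : 0 < t) : ContinuousAt (gammaIntegrand a) t := by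
  have hcont : ContinuousAt (fun t : ℝ => (t : ℂ) ^ (a - 1) * cexp (-(1 * t))) t :=
    (continuous_ofReal.continuousAt.cpow continuousAt_const (Or.inl (by simpa))).mul (by fun_prop)
  refine hcont.congr ?_
  filter_upwards [Ioi_mem_nhds ht] with u hu
  rw [gammaIntegrand, indicator_of_mem hu]

lemma fourier_eq {a : ℂ} (ha : 0 < a.re) :
    𝓕 (gammaIntegrand a) = fun v => bromwichLine v ^ (-a) * Gamma a := by
  ext v
  rw [Real.fourier_real_eq_integral_exp_smul,
    ← integral_cpow_mul_cexp_neg_mul_Ioi ha (by simp [bromwichLine.re_eq_one]),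
    ← integral_indicator measurableSet_Ioi]
  congr 1 with t
  rw [gammaIntegrand,
    ← indicator_smul_apply (Ioi 0) fun t : ℝ => cexp (↑(-2 * Real.pi * t * v) * I)]
  congr 1 with t
  rw [smul_eq_mul, mul_left_comm, ← Complex.exp_add, bromwichLine]
  push_cast
  ring_nf

end gammaIntegrand

theorem integral_cexp_mul_cpow_neg_bromwichLine {a : ℂ} (ha : 1 < a.re) :
    ∫ v, cexp (bromwichLine v) * bromwichLine v ^ (-a) = (Gamma a)⁻¹ := by
  have ha₀ : 0 < a.re := by linarith
  have hfourier : Integrable (𝓕 (gammaIntegrand a)) := by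
    rw [gammaIntegrand.fourier_eq ha₀]
    exact (bromwichLine.integrable_cpow_neg ha).mul_const _
  have hinv := (gammaIntegrand.integrable ha₀).fourierInv_fourier_eq hfourier
    (gammaIntegrand.continuousAt_of_pos a one_pos)
  rw [Real.fourierInv_eq', gammaIntegrand.fourier_eq ha₀] at hinv
  have hexp (v : ℝ) : cexp (bromwichLine v) =
      cexp 1 * cexp (((2 * Real.pi * inner ℝ v (1 : ℝ) : ℝ) : ℂ) * I) := by
    rw [← Complex.exp_add]
    simp [bromwichLine]
  calc ∫ v, cexp (bromwichLine v) * bromwichLine v ^ (-a)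
    _ = cexp 1 * (∫ v : ℝ, cexp (((2 * Real.pi * inner ℝ v (1 : ℝ) : ℝ) : ℂ) * I) •
          (bromwichLine v ^ (-a) * Gamma a)) * (Gamma a)⁻¹ := by
      rw [← integral_const_mul, ← integral_mul_const]
      congr 1 with v
      have := Gamma_ne_zero_of_re_pos ha₀
      rw [hexp, smul_eq_mul]
      field_simp
    _ = (Gamma a)⁻¹ := by
      rw [hinv]
      simp [gammaIntegrand, ← Complex.exp_add]

/-- The rational function that sums the series `∑ (a * n + b) * w ^ n` for `‖w‖ < 1`. It stays
meaningful for all `w ≠ 1`. -/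
def affineGeometricSum {𝕜 : Type*} [Field 𝕜] (a b w : 𝕜) : 𝕜 :=
  (b - a) * (1 - w)⁻¹ + a * (1 - w)⁻¹ ^ 2

section AffineGeometricSum

variable {𝕜 : Type*} [NormedField 𝕜]

lemma hasSum_affineGeometricSum [CompleteSpace 𝕜] (a b : 𝕜) {w : 𝕜} (hw : ‖w‖ < 1) :
    HasSum (fun n : ℕ => (a * n + b) * w ^ n) (affineGeometricSum a b w) := by
  have hw₁ : 1 - w ≠ 0 := sub_ne_zero.mpr fun h => by simp [← h] at hw
  convert! ((hasSum_coe_mul_geometric_of_norm_lt_one hw).mul_left a).add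
    ((hasSum_geometric_of_norm_lt_one hw).mul_left b) using 1
  · ext n
    ring
  · rw [affineGeometricSum]
    field_simp
    ring

lemma norm_affineGeometricSum_le (a b : 𝕜) {w : 𝕜} {d : ℝ} (hd : 0 < d) (hw : d ≤ ‖1 - w‖) :
    ‖affineGeometricSum a b w‖ ≤ ‖b - a‖ * d⁻¹ + ‖a‖ * d⁻¹ ^ 2 := by
  refine (norm_add_le _ _).trans ?_
  rw [norm_mul, norm_mul, norm_pow, norm_inv]
  gcongr

lemma tendsto_affineGeometricSum_cobounded (a b : 𝕜) :
    Tendsto (affineGeometricSum a b) (cobounded 𝕜) (𝓝 0) := by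
  have hinv : Tendsto (fun w : 𝕜 => (1 - w)⁻¹) (cobounded 𝕜) (𝓝 0) :=
    tendsto_inv₀_cobounded.comp (tendsto_const_sub_cobounded 1)
  unfold affineGeometricSum
  simpa using (hinv.const_mul (b - a)).add ((hinv.pow 2).const_mul a)

lemma differentiableAt_affineGeometricSum {𝕜 : Type*} [NontriviallyNormedField 𝕜] (a b : 𝕜)
    {w : 𝕜} (hw : w ≠ 1) : DifferentiableAt 𝕜 (affineGeometricSum a b) w := by
  have : 1 - w ≠ 0 := sub_ne_zero.mpr hw.symm
  unfold affineGeometricSum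
  fun_prop (disch := assumption)

end AffineGeometricSum

lemma rpow_mul_exp_neg_le_Gamma_add_one {x r : ℝ} (hx : 0 ≤ x) (hr : 0 ≤ r) :
    r ^ x * Real.exp (-r) ≤ Real.Gamma (x + 1) := by
  have hint := Real.GammaIntegral_convergent (s := x + 1) (by linarith)
  have hsub : Ioi r ⊆ Ioi 0 := Ioi_subset_Ioi hr
  rw [Real.Gamma_eq_integral (by linarith)]
  rw [add_sub_cancel_right] at hint ⊢
  calc r ^ x * Real.exp (-r)
    _ = ∫ t in Ioi r, Real.exp (-t) * r ^ x := by
      rw [integral_mul_const, integral_exp_neg_Ioi, mul_comm]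
    _ ≤ ∫ t in Ioi r, Real.exp (-t) * t ^ x := by
      refine setIntegral_mono_on ((integrableOn_exp_neg_Ioi r).mul_const _) (hint.mono_set hsub)
        measurableSet_Ioi fun t ht => ?_
      gcongr
      exact (mem_Ioi.mp ht).le
    _ ≤ ∫ t in Ioi 0, Real.exp (-t) * t ^ x := by
      refine setIntegral_mono_set hint ?_ hsub.eventuallyLE
      filter_upwards [ae_restrict_mem measurableSet_Ioi] with t (ht : 0 < t)
      exact mul_nonneg (Real.exp_nonneg _) (Real.rpow_nonneg ht.le _)

lemma inv_Gamma_le {x r : ℝ} (hx : 0 < x) (hr : 0 < r) :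
    (Real.Gamma x)⁻¹ ≤ Real.exp r * r ^ (-x) * x := by
  have hbound := rpow_mul_exp_neg_le_Gamma_add_one hx.le hr.le
  have hΓ := Real.Gamma_pos_of_pos hx
  rw [Real.Gamma_add_one hx.ne', Real.exp_neg] at hbound
  rw [Real.rpow_neg hr.le, inv_le_iff_one_le_mul₀ hΓ]
  have := Real.rpow_pos_of_pos hr x
  field_simp at hbound ⊢
  linarith

section MittagLeffler

variable {α β : ℝ}

lemma summable_pow_div_Gamma (hα : 0 < α) (hβ : 0 < β) {r : ℝ} (hr : 0 ≤ r) :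
    Summable fun n : ℕ => r ^ n / Real.Gamma (α * n + β) := by
  obtain ⟨R, hR, hRα⟩ : ∃ R : ℝ, 0 < R ∧ R ^ α = r + 1 :=
    ⟨(r + 1) ^ α⁻¹, by positivity, Real.rpow_inv_rpow (by positivity) hα.ne'⟩
  have hq : ‖r / (r + 1)‖ < 1 := by
    rw [Real.norm_of_nonneg (by positivity), div_lt_one (by positivity)]
    linarith
  refine Summable.of_nonneg_of_le (fun n => ?_) (fun n => ?_)
    ((hasSum_affineGeometricSum α β hq).summable.mul_left (Real.exp R * R ^ (-β)))
  · exact div_nonneg (by positivity) (Real.Gamma_nonneg_of_nonneg (by positivity))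
  have hpow : R ^ (-(α * n + β)) = ((r + 1) ^ n)⁻¹ * R ^ (-β) := by
    rw [neg_add, Real.rpow_add hR, Real.rpow_neg hR.le, Real.rpow_mul hR.le, hRα,
      Real.rpow_natCast]
  calc r ^ n / Real.Gamma (α * n + β)
    _ = r ^ n * (Real.Gamma (α * n + β))⁻¹ := div_eq_mul_inv _ _
    _ ≤ r ^ n * (Real.exp R * R ^ (-(α * n + β)) * (α * n + β)) := by
      gcongr
      exact inv_Gamma_le (by positivity) hR
    _ = Real.exp R * R ^ (-β) * ((α * n + β) * (r / (r + 1)) ^ n) := by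
      rw [hpow, div_pow]
      ring

theorem differentiable_mittagLeffler (hα : 0 < α) (hβ : 0 < β) :
    Differentiable ℂ (mittagLeffler α β) := by
  intro z
  refine (differentiableOn_tsum_of_summable_norm
    (summable_pow_div_Gamma hα hβ (r := ‖z‖ + 1) (by positivity)) (fun n => by fun_prop)
    Metric.isOpen_ball fun n w hw => ?_).differentiableAt
      (Metric.isOpen_ball.mem_nhds (x := z) (s := Metric.ball 0 (‖z‖ + 1)) (by simp))
  have hΓ : 0 < Real.Gamma (α * n + β) := Real.Gamma_pos_of_pos (by positivity)
  rw [norm_div, norm_pow, Complex.norm_of_nonneg hΓ.le]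
  gcongr
  exact (mem_ball_zero_iff.mp hw).le

lemma mittagLeffler_zero (α β : ℝ) : mittagLeffler α β 0 = (Real.Gamma β : ℂ)⁻¹ := by
  rw [mittagLeffler, tsum_eq_single 0 fun n hn => by simp [hn]]
  simp

lemma cos_mul_pi_div_two_pos (hα : α ∈ Ioo (-1) 1) : 0 < Real.cos (α * (Real.pi / 2)) := by
  have hpi := Real.pi_pos
  exact Real.cos_pos_of_mem_Ioo ⟨by nlinarith [hα.1], by nlinarith [hα.2]⟩

lemma cos_mul_norm_rpow_le_re_cpow (hα : α ∈ Icc 0 1) {s : ℂ} (hs : 0 ≤ s.re) :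
    Real.cos (α * (Real.pi / 2)) * ‖s‖ ^ α ≤ (s ^ (α : ℂ)).re := by
  have harg : |s.arg * α| ≤ α * (Real.pi / 2) := by
    rw [abs_mul, abs_of_nonneg hα.1, mul_comm]
    exact mul_le_mul_of_nonneg_left (abs_arg_le_pi_div_two_iff.mpr hs) hα.1
  rw [cpow_ofReal_re, mul_comm, ← Real.cos_abs (s.arg * α)]
  gcongr
  exact Real.cos_le_cos_of_nonneg_of_le_pi (abs_nonneg _) (by nlinarith [hα.2, Real.pi_pos]) harg

lemma cos_sub_le_norm_one_sub_mul_cpow_neg (hα : α ∈ Icc 0 1) {s z : ℂ} (hs : 0 ≤ s.re)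
    (hs₁ : 1 ≤ ‖s‖) {m : ℝ} (hm : 0 ≤ m) (hz : z.re ≤ m) :
    Real.cos (α * (Real.pi / 2)) - m ≤ ‖1 - z * s ^ (-(α : ℂ))‖ := by
  have hs₀ : s ≠ 0 := norm_pos_iff.mp (by linarith)
  have hnorm : ‖s ^ (α : ℂ)‖ = ‖s‖ ^ α := by simp [norm_cpow_of_ne_zero hs₀]
  have hone : 1 ≤ ‖s‖ ^ α := Real.one_le_rpow hs₁ hα.1
  have hfactor : 1 - z * s ^ (-(α : ℂ)) = (s ^ (α : ℂ) - z) / s ^ (α : ℂ) := by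
    rw [cpow_neg, sub_div, div_self (by simp [hs₀]), div_eq_mul_inv]
  rw [hfactor, norm_div, hnorm, le_div_iff₀ (by linarith)]
  calc (Real.cos (α * (Real.pi / 2)) - m) * ‖s‖ ^ α
    _ = Real.cos (α * (Real.pi / 2)) * ‖s‖ ^ α - m * ‖s‖ ^ α := sub_mul _ _ _
    _ ≤ (s ^ (α : ℂ)).re - z.re := by
      gcongr
      · exact cos_mul_norm_rpow_le_re_cpow hα hs
      · exact hz.trans (le_mul_of_one_le_right hm hone)
    _ ≤ ‖s ^ (α : ℂ) - z‖ := (sub_re _ _).symm.trans_le (re_le_norm _)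

/-- The integrand, along `s = bromwichLine v`, of the contour representation of `E_{α,β}(z)`: the
sum of the series of `mittagLefflerKernel.term`, in the closed form that remains meaningful for
`‖z‖ ≥ 1`. -/
noncomputable def mittagLefflerKernel (α β : ℝ) (z : ℂ) (v : ℝ) : ℂ :=
  cexp (bromwichLine v) * bromwichLine v ^ (-(β + 1 : ℂ)) *
    affineGeometricSum (α : ℂ) β (z * bromwichLine v ^ (-(α : ℂ)))

namespace mittagLefflerKernel

protected lemma aestronglyMeasurable (α β : ℝ) (z : ℂ) :
    AEStronglyMeasurable (mittagLefflerKernel α β z) := by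
  have hsum : Measurable (affineGeometricSum (α : ℂ) (β : ℂ)) := by
    unfold affineGeometricSum
    fun_prop
  exact ((bromwichLine.continuous.cexp.mul (bromwichLine.continuous_cpow _)).measurable.mul
    (hsum.comp ((bromwichLine.continuous_cpow _).measurable.const_mul z))).aestronglyMeasurable

lemma exists_integrable_bound (hα : α ∈ Icc 0 1) (hβ : 0 < β) {m : ℝ} (hm : 0 ≤ m)
    (hm' : m < Real.cos (α * (Real.pi / 2))) :
    ∃ bound : ℝ → ℝ, Integrable bound ∧
      ∀ z : ℂ, z.re ≤ m → ∀ v, ‖mittagLefflerKernel α β z v‖ ≤ bound v := by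
  set d := Real.cos (α * (Real.pi / 2)) - m
  refine ⟨_, (bromwichLine.integrable_cexp_mul_cpow_neg (x := β + 1)
    (by simpa using hβ)).norm.mul_const (‖(β : ℂ) - α‖ * d⁻¹ + ‖(α : ℂ)‖ * d⁻¹ ^ 2),
    fun z hz v => ?_⟩
  rw [mittagLefflerKernel, norm_mul]
  gcongr
  exact norm_affineGeometricSum_le _ _ (sub_pos.mpr hm')
    (cos_sub_le_norm_one_sub_mul_cpow_neg hα (by simp [bromwichLine.re_eq_one])
      (bromwichLine.one_le_norm v) hm hz)

lemma differentiableOn_left (hα : α ∈ Ioo 0 1) (β v : ℝ) :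
    DifferentiableOn ℂ (mittagLefflerKernel α β · v)
      {z | z.re < Real.cos (α * (Real.pi / 2))} := by
  intro z (hz : z.re < _)
  have hlt : max z.re 0 < Real.cos (α * (Real.pi / 2)) :=
    max_lt hz (cos_mul_pi_div_two_pos ⟨by linarith [hα.1], hα.2⟩)
  have hpos := (sub_pos.mpr hlt).trans_le <| cos_sub_le_norm_one_sub_mul_cpow_neg
    (Ioo_subset_Icc_self hα) (by simp [bromwichLine.re_eq_one]) (bromwichLine.one_le_norm v)
    (le_max_right _ _) (le_max_left _ _)
  have hne : z * bromwichLine v ^ (-(α : ℂ)) ≠ 1 :=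
    (sub_ne_zero.mp (norm_pos_iff.mp hpos)).symm
  have hmul : DifferentiableAt ℂ (fun z : ℂ => z * bromwichLine v ^ (-(α : ℂ))) z := by fun_prop
  exact (((differentiableAt_affineGeometricSum (α : ℂ) β hne).comp z hmul).const_mul
    _).differentiableWithinAt

lemma differentiableOn_integral (hα : α ∈ Ioo 0 1) (hβ : 0 < β) :
    DifferentiableOn ℂ (fun z => ∫ v, mittagLefflerKernel α β z v)
      {z | z.re < Real.cos (α * (Real.pi / 2))} := by
  have hcos := cos_mul_pi_div_two_pos (α := α) ⟨by linarith [hα.1], hα.2⟩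
  refine differentiableOn_integral_of_dominated_loc (isOpen_lt continuous_re continuous_const)
    (fun z _ => mittagLefflerKernel.aestronglyMeasurable α β z)
    (Eventually.of_forall (differentiableOn_left hα β)) fun z hz => ?_
  obtain ⟨m, hzm, hm⟩ := exists_between (max_lt hz hcos)
  obtain ⟨bound, hint, hbound⟩ := exists_integrable_bound (Ioo_subset_Icc_self hα) hβ
    ((le_max_right _ _).trans hzm.le) hm
  exact ⟨{w | w.re < m}, (isOpen_lt continuous_re continuous_const).mem_nhds
    ((le_max_left _ _).trans_lt hzm), bound, hint,
    Eventually.of_forall fun v w hw => hbound w (le_of_lt hw) v⟩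

lemma tendsto_cobounded (α β v : ℝ) :
    Tendsto (mittagLefflerKernel α β · v) (cobounded ℂ) (𝓝 0) := by
  have hne : bromwichLine v ^ (-(α : ℂ)) ≠ 0 := by simp [bromwichLine.ne_zero]
  have hlim := ((tendsto_affineGeometricSum_cobounded (α : ℂ) β).comp
    (tendsto_mul_right_cobounded hne)).const_mul
      (cexp (bromwichLine v) * bromwichLine v ^ (-(β + 1 : ℂ)))
  rwa [mul_zero] at hlim

/-- The part of the integrand, along `s = bromwichLine v`, that integrates to
`z ^ n / Γ(α * n + β)`. Writing `1 / Γ(x)` as `x / Γ(x + 1)` makes the integral absolutely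
convergent for all `x > 0`. -/
noncomputable def term (α β : ℝ) (z : ℂ) (n : ℕ) (v : ℝ) : ℂ :=
  (α * n + β) * z ^ n * (cexp (bromwichLine v) * bromwichLine v ^ (-(α * n + β + 1 : ℂ)))

lemma term_eq (α β : ℝ) (z : ℂ) (n : ℕ) (v : ℝ) :
    term α β z n v =
      cexp (bromwichLine v) * bromwichLine v ^ (-(β + 1 : ℂ)) *
        ((α * n + β) * (z * bromwichLine v ^ (-(α : ℂ))) ^ n) := by
  have hpow : bromwichLine v ^ (-(α * n + β + 1 : ℂ)) =
      (bromwichLine v ^ (-(α : ℂ))) ^ n * bromwichLine v ^ (-(β + 1 : ℂ)) := by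
    rw [← cpow_nat_mul, ← cpow_add _ _ (bromwichLine.ne_zero v)]
    ring_nf
  rw [term, hpow, mul_pow]
  ring

lemma hasSum_term (hα : 0 ≤ α) (β : ℝ) {z : ℂ} (hz : ‖z‖ < 1) (v : ℝ) :
    HasSum (term α β z · v) (mittagLefflerKernel α β z v) := by
  have hw : ‖z * bromwichLine v ^ (-(α : ℂ))‖ < 1 := by
    rw [norm_mul]
    exact (mul_le_of_le_one_right (norm_nonneg z)
      (bromwichLine.norm_cpow_neg_ofReal_le_one hα v)).trans_lt hz
  simp_rw [term_eq]
  exact (hasSum_affineGeometricSum (α : ℂ) β hw).mul_left _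

lemma norm_term_le (hα : 0 ≤ α) (hβ : 0 ≤ β) (z : ℂ) (n : ℕ) (v : ℝ) :
    ‖term α β z n v‖ ≤
      (α * n + β) * ‖z‖ ^ n *
        ‖cexp (bromwichLine v) * bromwichLine v ^ (-(β + 1 : ℂ))‖ := by
  have hcoeff : ‖(α * n + β : ℂ)‖ = α * n + β := by
    rw [← Complex.norm_of_nonneg (r := α * n + β) (by positivity)]
    push_cast
    rfl
  rw [term_eq, norm_mul, norm_mul (α * n + β : ℂ), hcoeff, norm_pow, norm_mul z, mul_comm]
  gcongr
  exact mul_le_of_le_one_right (norm_nonneg z) (bromwichLine.norm_cpow_neg_ofReal_le_one hα v)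

lemma integrable_term (hα : 0 ≤ α) (hβ : 0 < β) (z : ℂ) (n : ℕ) :
    Integrable (term α β z n) :=
  (bromwichLine.integrable_cexp_mul_cpow_neg
    (by simpa using add_pos_of_nonneg_of_pos (mul_nonneg hα n.cast_nonneg) hβ)).const_mul _

lemma integral_term (hα : 0 ≤ α) (hβ : 0 < β) (z : ℂ) (n : ℕ) :
    ∫ v, term α β z n v = z ^ n / (Real.Gamma (α * n + β) : ℂ) := by
  have hx : 0 < α * n + β := by positivity
  have hx' : (α * n + β : ℂ) ≠ 0 := mod_cast hx.ne'
  unfold term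
  rw [integral_const_mul, integral_cexp_mul_cpow_neg_bromwichLine (by simpa using hx),
    Gamma_add_one _ hx', ← Gamma_ofReal]
  push_cast
  field_simp

end mittagLefflerKernel

lemma mittagLeffler_eq_integral_of_norm_lt_one (hα : 0 ≤ α) (hβ : 0 < β) {z : ℂ}
    (hz : ‖z‖ < 1) : mittagLeffler α β z = ∫ v, mittagLefflerKernel α β z v := by
  have hsum : Summable fun n : ℕ => ∫ v, ‖mittagLefflerKernel.term α β z n v‖ := by
    refine Summable.of_nonneg_of_le (fun n => integral_nonneg fun v => norm_nonneg _)
      (fun n => ?_)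
      ((hasSum_affineGeometricSum α β (w := ‖z‖) (by simpa using hz)).summable.mul_right
        (∫ v, ‖cexp (bromwichLine v) * bromwichLine v ^ (-(β + 1 : ℂ))‖))
    rw [← integral_const_mul]
    exact integral_mono (mittagLefflerKernel.integrable_term hα hβ z n).norm
      ((bromwichLine.integrable_cexp_mul_cpow_neg (by simpa using hβ)).norm.const_mul _)
      (mittagLefflerKernel.norm_term_le hα hβ.le z n)
  have hinterchange := hasSum_integral_of_summable_integral_norm
    (mittagLefflerKernel.integrable_term hα hβ z) hsum
  simp_rw [mittagLefflerKernel.integral_term hα hβ,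
    (mittagLefflerKernel.hasSum_term hα β hz _).tsum_eq] at hinterchange
  exact hinterchange.tsum_eq

theorem mittagLeffler_eq_integral (hα : α ∈ Ioo 0 1) (hβ : 0 < β) {z : ℂ}
    (hz : z.re < Real.cos (α * (Real.pi / 2))) :
    mittagLeffler α β z = ∫ v, mittagLefflerKernel α β z v := by
  have hopen : IsOpen {z : ℂ | z.re < Real.cos (α * (Real.pi / 2))} :=
    isOpen_lt continuous_re continuous_const
  refine ((differentiable_mittagLeffler hα.1 hβ).differentiableOn.analyticOnNhd
    hopen).eqOn_of_preconnected_of_eventuallyEq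
    ((mittagLefflerKernel.differentiableOn_integral hα hβ).analyticOnNhd hopen)
    (convex_halfSpace_re_lt _).isPreconnected (z₀ := 0)
    (by simpa using cos_mul_pi_div_two_pos ⟨by linarith [hα.1], hα.2⟩) ?_ hz
  filter_upwards [Metric.ball_mem_nhds (0 : ℂ) one_pos] with w hw
  exact mittagLeffler_eq_integral_of_norm_lt_one hα.1.le hβ (mem_ball_zero_iff.mp hw)

lemma exists_norm_mittagLeffler_le_of_re_nonpos (hα : α ∈ Ioo 0 1) (hβ : 0 < β) :
    ∃ C, ∀ z : ℂ, z.re ≤ 0 → ‖mittagLeffler α β z‖ ≤ C := by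
  have hcos := cos_mul_pi_div_two_pos (α := α) ⟨by linarith [hα.1], hα.2⟩
  obtain ⟨bound, hint, hbound⟩ := mittagLefflerKernel.exists_integrable_bound
    (Ioo_subset_Icc_self hα) hβ le_rfl hcos
  refine ⟨∫ v, bound v, fun z hz => ?_⟩
  rw [mittagLeffler_eq_integral hα hβ (hz.trans_lt hcos)]
  exact norm_integral_le_of_norm_le hint (Eventually.of_forall (hbound z hz))

theorem tendsto_mittagLeffler_cobounded_of_re_nonpos (hα : α ∈ Ioo 0 1) (hβ : 0 < β) :
    Tendsto (mittagLeffler α β) (cobounded ℂ ⊓ 𝓟 {z | z.re ≤ 0}) (𝓝 0) := by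
  have hcos := cos_mul_pi_div_two_pos (α := α) ⟨by linarith [hα.1], hα.2⟩
  have hre : ∀ᶠ z in cobounded ℂ ⊓ 𝓟 {z | z.re ≤ 0}, z.re ≤ 0 :=
    mem_inf_of_right (mem_principal_self _)
  have : (cobounded ℂ).IsCountablyGenerated := by
    rw [← comap_norm_atTop]
    infer_instance
  obtain ⟨bound, hint, hbound⟩ := mittagLefflerKernel.exists_integrable_bound
    (Ioo_subset_Icc_self hα) hβ le_rfl hcos
  have hlim : Tendsto (fun z => ∫ v, mittagLefflerKernel α β z v)
      (cobounded ℂ ⊓ 𝓟 {z | z.re ≤ 0}) (𝓝 (∫ _, 0)) :=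
    tendsto_integral_filter_of_dominated_convergence bound
      (Eventually.of_forall (mittagLefflerKernel.aestronglyMeasurable α β))
      (hre.mono fun z hz => Eventually.of_forall (hbound z hz)) hint
      (Eventually.of_forall fun v =>
        (mittagLefflerKernel.tendsto_cobounded α β v).mono_left inf_le_left)
  rw [integral_zero] at hlim
  exact hlim.congr' (hre.mono fun z hz =>
    (mittagLeffler_eq_integral hα hβ (hz.trans_lt hcos)).symm)

lemma tendsto_mittagLeffler_I_mul_mul (hα : α ∈ Ioo 0 1) (hβ : 0 < β) {ξ : ℝ} (hξ : ξ ≠ 0) :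
    Tendsto (fun s : ℝ => mittagLeffler α β (I * s * ξ)) (cocompact ℝ) (𝓝 0) := by
  refine (tendsto_mittagLeffler_cobounded_of_re_nonpos hα hβ).comp (tendsto_inf.mpr ⟨?_, ?_⟩)
  · rw [← Metric.cobounded_eq_cocompact]
    exact (tendsto_mul_right_cobounded (ofReal_ne_zero.mpr hξ)).comp
      ((tendsto_mul_left_cobounded I_ne_zero).comp
        (RCLike.tendsto_ofReal_cobounded_cobounded ℂ))
  · exact tendsto_principal.mpr (Eventually.of_forall fun s => by simp)

end MittagLeffler

theorem fcf_tendsto_zero_of_absolutelyContinuous_general (α β : ℝ) (hα : α ∈ Ioo 0 1)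
    (hβ : 0 < β) (μ : Measure ℝ) [IsFiniteMeasure μ] :
    Tendsto (fun s : ℝ => ∫ ξ : ℝ, mittagLeffler α β (I * s * ξ) ∂μ)
      (cocompact ℝ) (𝓝 (μ.real {0} / Real.Gamma β : ℂ)) := by
  obtain ⟨C, hC⟩ := exists_norm_mittagLeffler_le_of_re_nonpos hα hβ
  have : (cocompact ℝ).IsCountablyGenerated := by
    rw [cocompact_eq_atBot_atTop]
    infer_instance
  have hlim : ∫ ξ, ({0} : Set ℝ).indicator (fun _ => (Real.Gamma β : ℂ)⁻¹) ξ ∂μ =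
      μ.real {0} / Real.Gamma β := by
    rw [integral_indicator_const _ (measurableSet_singleton 0), real_smul, div_eq_mul_inv]
  rw [← hlim]
  refine tendsto_integral_filter_of_dominated_convergence (fun _ => C)
    (Eventually.of_forall fun s => ?_)
    (Eventually.of_forall fun s => Eventually.of_forall fun ξ => hC _ (by simp))
    (integrable_const C) (Eventually.of_forall fun ξ => ?_)
  · exact ((differentiable_mittagLeffler hα.1 hβ).continuous.comp
      (by fun_prop)).aestronglyMeasurable
  · rcases eq_or_ne ξ 0 with rfl | hξ
    · simp [mittagLeffler_zero]
    · simpa [hξ] using tendsto_mittagLeffler_I_mul_mul hα hβ hξ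

/-- For `α ∈ (0,1)`, `β > 0` and an absolutely continuous probability measure `μ` on `ℝ`,
the fractional characteristic function `φ_{α,β}^{(μ)}(s) = ∫ E_{α,β}(i s ξ) dμ(ξ)` tends to `0`
as `|s| → ∞`. -/
theorem fcf_tendsto_zero_of_absolutelyContinuous (α β : ℝ) (hα : α ∈ Set.Ioo (0 : ℝ) 1)
    (hβ : 0 < β) (μ : Measure ℝ) [IsProbabilityMeasure μ] (hμ : μ ≪ volume) :
    Filter.Tendsto (fun s : ℝ => ∫ ξ : ℝ, mittagLeffler α β (Complex.I * s * ξ) ∂μ)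
      (Filter.cocompact ℝ) (nhds 0) := by
  simpa [measureReal_def, hμ (Real.volume_singleton (a := 0))] using
    fcf_tendsto_zero_of_absolutelyContinuous_general α β hα hβ μ
end

section
/- Let α > 0 and T > 0. Then the linear span of the family of functions {t ↦ t^{αk + α − 1} : k ∈ ℕ} is dense in L^1(0,T). -/
open MeasureTheory

/-!
Factor `t ^ (α * k + r) = w t * φ t ^ k` with weight `w t = t ^ r` and `φ t = t ^ α`. Since `φ` is
injective on `[0, T]`, Stone–Weierstrass makes polynomials in `φ` uniformly dense among the
continuous functions there, so in `Lᵖ` the span of the `w * φ ^ k` has the same closure as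
`{w * g | g continuous}`. The latter set is dense because multiplication by `w` is an isometry from
`Lᵖ(|w|ᵖ dμ)` onto `Lᵖ(μ)`, and `|w|ᵖ dμ` is a finite measure, for which continuous functions are
dense.
-/

open Polynomial
open scoped ENNReal BoundedContinuousFunction

section Weight

variable {Ω : Type*} [MeasurableSpace Ω] {μ : Measure Ω} {p : ℝ≥0∞} {w : Ω → ℝ}

lemma eLpNorm_withDensity_enorm_rpow {E : Type*} [NormedAddCommGroup E] [NormedSpace ℝ E]
    (hp₀ : p ≠ 0) (hp : p ≠ ∞) (hw : AEMeasurable w μ) (f : Ω → E) :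
    eLpNorm f p (μ.withDensity fun x ↦ ‖w x‖ₑ ^ p.toReal) = eLpNorm (fun x ↦ w x • f x) p μ := by
  have density_lt_top : ∀ᵐ x ∂μ, ‖w x‖ₑ ^ p.toReal < ∞ :=
    ae_of_all _ fun x ↦ ENNReal.rpow_lt_top_of_nonneg ENNReal.toReal_nonneg enorm_ne_top
  simp only [eLpNorm_eq_lintegral_rpow_enorm_toReal hp₀ hp, enorm_smul,
    ENNReal.mul_rpow_of_nonneg _ _ ENNReal.toReal_nonneg]
  rw [lintegral_withDensity_eq_lintegral_mul_non_measurable₀ _ (hw.enorm.pow_const _)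
    density_lt_top]
  rfl

lemma isFiniteMeasure_withDensity_enorm_rpow (hp₀ : p ≠ 0) (hp : p ≠ ∞) (hw : MemLp w p μ) :
    IsFiniteMeasure (μ.withDensity fun x ↦ ‖w x‖ₑ ^ p.toReal) :=
  isFiniteMeasure_withDensity
    (lintegral_rpow_enorm_lt_top_of_eLpNorm_lt_top hp₀ hp hw.eLpNorm_lt_top).ne

lemma exists_boundedContinuous_eLpNorm_sub_smul_le [TopologicalSpace Ω]
    [TopologicalSpace.PseudoMetrizableSpace Ω] [BorelSpace Ω]
    {E : Type*} [NormedAddCommGroup E] [NormedSpace ℝ E] {f : Ω → E}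
    (hp₀ : p ≠ 0) (hp : p ≠ ∞) (hw : MemLp w p μ) (hw₀ : ∀ᵐ x ∂μ, w x ≠ 0) (hf : MemLp f p μ)
    {ε : ℝ≥0∞} (hε : ε ≠ 0) :
    ∃ g : Ω →ᵇ E, eLpNorm (fun x ↦ f x - w x • g x) p μ ≤ ε := by
  set ν := μ.withDensity fun x ↦ ‖w x‖ₑ ^ p.toReal
  have eLpNorm_ν := eLpNorm_withDensity_enorm_rpow (E := E) hp₀ hp hw.aemeasurable
  have : IsFiniteMeasure ν := isFiniteMeasure_withDensity_enorm_rpow hp₀ hp hw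
  have quotient_memLp : MemLp (fun x ↦ (w x)⁻¹ • f x) p ν := by
    refine ⟨(hw.aemeasurable.inv.aestronglyMeasurable.smul hf.1).mono_ac
      (withDensity_absolutelyContinuous _ _), ?_⟩
    rw [eLpNorm_ν]
    refine (eLpNorm_congr_ae ?_).trans_lt hf.eLpNorm_lt_top
    filter_upwards [hw₀] with x hx
    exact smul_inv_smul₀ hx _
  obtain ⟨g, hg, -⟩ := quotient_memLp.exists_boundedContinuous_eLpNorm_sub_le hp hε
  refine ⟨g, (eLpNorm_congr_ae ?_).trans_le (eLpNorm_ν _ ▸ hg)⟩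
  filter_upwards [hw₀] with x hx
  simp only [Pi.sub_apply, smul_sub, smul_inv_smul₀ hx]

end Weight

lemma exists_polynomial_comp_near_of_injOn {Ω : Type*} [TopologicalSpace Ω] {K : Set Ω}
    {φ g : Ω → ℝ} (hK : IsCompact K) (hφ : ContinuousOn φ K) (hφK : K.InjOn φ)
    (hg : ContinuousOn g K) {ε : ℝ} (hε : 0 < ε) :
    ∃ P : ℝ[X], ∀ x ∈ K, ‖P.eval (φ x) - g x‖ < ε := by
  have : CompactSpace K := isCompact_iff_compactSpace.mp hK
  let φK : C(K, ℝ) := ⟨K.domRestrict φ, hφ.domRestrict⟩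
  have separates : (Algebra.adjoin ℝ {φK}).SeparatesPoints := fun x y hxy ↦
    ⟨φK, ⟨φK, Algebra.self_mem_adjoin_singleton ℝ φK, rfl⟩, hφK.injective.ne hxy⟩
  obtain ⟨⟨a, ha⟩, ha_near⟩ :=
    ContinuousMap.exists_mem_subalgebra_near_continuous_of_separatesPoints _ separates
      (K.domRestrict g) hg.domRestrict ε hε
  obtain ⟨P, rfl⟩ := Algebra.adjoin_mem_exists_aeval ℝ φK ha
  refine ⟨P, fun x hx ↦ ?_⟩
  have near_at_x := ha_near ⟨x, hx⟩
  rwa [aeval_continuousMap_apply] at near_at_x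

section Density

variable {Ω : Type*} [MeasurableSpace Ω] {μ : Measure Ω} {p : ℝ≥0∞} {w φ : Ω → ℝ}

lemma exists_mem_span_ae_eq_mul_polynomial_comp
    (hwφ : ∀ k : ℕ, MemLp (fun x ↦ w x * φ x ^ k) p μ) (P : ℝ[X]) :
    ∃ f ∈ Submodule.span ℝ {f : Lp ℝ p μ | ∃ k : ℕ, ∀ᵐ x ∂μ, f x = w x * φ x ^ k},
      ∀ᵐ x ∂μ, f x = w x * P.eval (φ x) := by
  induction P using Polynomial.induction_on' with
  | add P Q hP hQ =>
    obtain ⟨f, f_mem, hf⟩ := hP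
    obtain ⟨g, g_mem, hg⟩ := hQ
    refine ⟨f + g, add_mem f_mem g_mem, ?_⟩
    filter_upwards [hf, hg, Lp.coeFn_add f g] with x hfx hgx hx
    rw [hx, Pi.add_apply, hfx, hgx, eval_add, mul_add]
  | monomial k a =>
    set f := (hwφ k).toLp
    have hf : ∀ᵐ x ∂μ, f x = w x * φ x ^ k := (hwφ k).coeFn_toLp
    refine ⟨a • f, Submodule.smul_mem _ a (Submodule.subset_span ⟨k, hf⟩), ?_⟩
    filter_upwards [hf, Lp.coeFn_smul a f] with x hfx hx
    rw [hx, Pi.smul_apply, hfx, eval_monomial, smul_eq_mul, mul_left_comm]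

variable [TopologicalSpace Ω] [Fact (1 ≤ p)] {K : Set Ω}

lemma dense_setOf_ae_eq_mul_boundedContinuous [TopologicalSpace.PseudoMetrizableSpace Ω]
    [BorelSpace Ω] (hp : p ≠ ∞) (hw : MemLp w p μ) (hw₀ : ∀ᵐ x ∂μ, w x ≠ 0) :
    Dense {f : Lp ℝ p μ | ∃ g : Ω →ᵇ ℝ, ∀ᵐ x ∂μ, f x = w x * g x} := by
  have hp₀ : p ≠ 0 := (zero_lt_one.trans_le Fact.out).ne'
  intro f
  refine (mem_closure_iff_nhds_basis Metric.nhds_basis_closedEBall).mpr fun ε hε ↦ ?_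
  obtain ⟨g, hg⟩ :=
    exists_boundedContinuous_eLpNorm_sub_smul_le hp₀ hp hw hw₀ (Lp.memLp f) hε.ne'
  have hg_top : MemLp g ∞ μ :=
    memLp_top_of_bound g.continuous.aestronglyMeasurable ‖g‖ (ae_of_all _ g.norm_coe_le_norm)
  have hwg : MemLp (fun x ↦ w x * g x) p μ := hg_top.mul' hw
  refine ⟨hwg.toLp, ⟨g, hwg.coeFn_toLp⟩, ?_⟩
  rwa [Metric.mem_closedEBall', ← Lp.toLp_coeFn f (Lp.memLp f), Lp.edist_toLp_toLp]

lemma mem_closure_span_of_ae_eq_mul_continuous [OpensMeasurableSpace Ω] {g : Ω → ℝ}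
    (hK : IsCompact K) (hμK : ∀ᵐ x ∂μ, x ∈ K) (hw : MemLp w p μ) (hφ : Continuous φ)
    (hφK : K.InjOn φ) (hg : Continuous g) {f : Lp ℝ p μ} (hf : ∀ᵐ x ∂μ, f x = w x * g x) :
    f ∈ closure (Submodule.span ℝ
      {f : Lp ℝ p μ | ∃ k : ℕ, ∀ᵐ x ∂μ, f x = w x * φ x ^ k} : Set (Lp ℝ p μ)) := by
  refine Metric.mem_closure_iff.mpr fun ε hε ↦ ?_
  set W := hw.toLp
  obtain ⟨δ, hδ, mul_δ_lt⟩ := exists_pos_mul_lt hε ‖W‖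
  obtain ⟨P, hP⟩ :=
    exists_polynomial_comp_near_of_injOn hK hφ.continuousOn hφK hg.continuousOn hδ
  have hwφ (k : ℕ) : MemLp (fun x ↦ w x * φ x ^ k) p μ := by
    obtain ⟨C, hC⟩ := hK.exists_bound_of_continuousOn (hφ.pow k).continuousOn
    exact (memLp_top_of_bound (hφ.pow k).aestronglyMeasurable C (hμK.mono hC)).mul' hw
  obtain ⟨h, h_mem, hh⟩ := exists_mem_span_ae_eq_mul_polynomial_comp hwφ P
  refine ⟨h, h_mem, ?_⟩
  rw [dist_comm, dist_eq_norm]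
  refine (Lp.norm_le_mul_norm_of_ae_le_mul ?_).trans_lt (mul_comm δ ‖W‖ ▸ mul_δ_lt)
  filter_upwards [hμK, hf, hh, hw.coeFn_toLp, Lp.coeFn_sub h f] with x hxK hfx hhx hWx hx
  calc ‖(h - f : Lp ℝ p μ) x‖ = ‖P.eval (φ x) - g x‖ * ‖w x‖ := by
        rw [hx, Pi.sub_apply, hfx, hhx, ← mul_sub, norm_mul, mul_comm]
    _ ≤ δ * ‖W x‖ := by
        rw [hWx]
        gcongr
        exact (hP x hxK).le

theorem dense_span_mul_pow [TopologicalSpace.PseudoMetrizableSpace Ω] [BorelSpace Ω] (hp : p ≠ ∞)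
    (hK : IsCompact K) (hμK : ∀ᵐ x ∂μ, x ∈ K) (hw : MemLp w p μ) (hw₀ : ∀ᵐ x ∂μ, w x ≠ 0)
    (hφ : Continuous φ) (hφK : K.InjOn φ) :
    Dense (Submodule.span ℝ
      {f : Lp ℝ p μ | ∃ k : ℕ, ∀ᵐ x ∂μ, f x = w x * φ x ^ k} : Set (Lp ℝ p μ)) := by
  refine dense_closure.mp ((dense_setOf_ae_eq_mul_boundedContinuous hp hw hw₀).mono ?_)
  rintro f ⟨g, hf⟩
  exact mem_closure_span_of_ae_eq_mul_continuous hK hμK hw hφ hφK g.continuous hf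

end Density

lemma memLp_rpow_Ioo_iff {p : ℝ≥0∞} {r T : ℝ} (hp₀ : p ≠ 0) (hp : p ≠ ∞) (hT : 0 < T) :
    MemLp (fun t : ℝ ↦ t ^ r) p (volume.restrict (Set.Ioo 0 T)) ↔ -1 < r * p.toReal := by
  have measurable_rpow : Measurable fun t : ℝ ↦ t ^ r := by fun_prop
  rw [← integrable_norm_rpow_iff measurable_rpow.aestronglyMeasurable hp₀ hp,
    ← intervalIntegral.integrableOn_Ioo_rpow_iff hT]
  refine integrableOn_congr_fun (fun t ht ↦ ?_) measurableSet_Ioo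
  simp only [Real.norm_of_nonneg (Real.rpow_nonneg ht.1.le r), ← Real.rpow_mul ht.1.le]

theorem muntz_density_L1_general {p : ℝ≥0∞} [Fact (1 ≤ p)] {α r T : ℝ} (hp : p ≠ ∞) (hα : 0 < α)
    (hr : -1 < r * p.toReal) (hT : 0 < T) :
    Dense (Submodule.span ℝ
      {f : Lp ℝ p (volume.restrict (Set.Ioo 0 T)) |
        ∃ k : ℕ, ∀ᵐ t ∂(volume.restrict (Set.Ioo 0 T)), f t = t ^ (α * k + r)} :
      Set (Lp ℝ p (volume.restrict (Set.Ioo 0 T)))) := by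
  have hp₀ : p ≠ 0 := (zero_lt_one.trans_le Fact.out).ne'
  have mem_Ioo : ∀ᵐ t ∂(volume.restrict (Set.Ioo 0 T)), t ∈ Set.Ioo 0 T :=
    ae_restrict_mem measurableSet_Ioo
  have dense_span := dense_span_mul_pow hp isCompact_Icc
    (mem_Ioo.mono fun t ht ↦ Set.Ioo_subset_Icc_self ht)
    ((memLp_rpow_Ioo_iff hp₀ hp hT).mpr hr)
    (mem_Ioo.mono fun t ht ↦ (Real.rpow_pos_of_pos ht.1 r).ne')
    (Real.continuous_rpow_const hα.le)
    ((Real.rpow_left_injOn hα.ne').mono fun t ht ↦ ht.1)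
  refine dense_span.mono (Submodule.span_mono ?_)
  rintro f ⟨k, hf⟩
  refine ⟨k, ?_⟩
  filter_upwards [hf, mem_Ioo] with t hft ht
  rw [hft, ← Real.rpow_mul_natCast ht.1.le, ← Real.rpow_add ht.1, add_comm]

/-- Müntz-type density: for `α > 0`, the linear span of the powers `t ↦ t^{αk+α−1}`, `k ∈ ℕ`,
is dense in `L¹(0,T)`. -/
theorem muntz_density_L1 (α T : ℝ) (hα : 0 < α) (hT : 0 < T) :
    Dense ((Submodule.span ℝ
        {f : Lp ℝ 1 (volume.restrict (Set.Ioo 0 T)) |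
          ∃ k : ℕ, ∀ᵐ t ∂(volume.restrict (Set.Ioo 0 T)),
            f t = t ^ (α * k + α - 1)} : Submodule ℝ _) :
      Set (Lp ℝ 1 (volume.restrict (Set.Ioo 0 T)))) := by
  simp only [add_sub_assoc]
  exact muntz_density_L1_general ENNReal.one_ne_top hα (by simpa using hα) hT
end
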